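/- Let p ≥ 6, u = 2^(1−p), and let o_x, o_y ∈ [1, 1/(8u) − 2]. Let x_h, x_l, y_h, y_l ∈ F_p satisfy |x_l| ≤ o_x·u·|x_h| and |y_l| ≤ o_y·u·|y_h|. Consider any execution of accurate double-word addition in faithful rounding, and assume additionally that the computed pair (t_h, t_l) satisfies |t_l| ≤ o_t·u·|t_h| for some o_t ∈ [1, 1/(8u) − 2]. Then the concluding Fast2Sum (normalization) step is valid: |z_h + z_l − (v_h + w)| ≤ u²·|v_h + w|. -/

import Mathlib

/-!
The last step is a Fast2Sum of `vh` and `w`.  Such a step is harmless as soon as `d2 = zh - vh` is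
computed without error: then `zl` is a faithful rounding of the rounding error `vh + w - zh`, and
two relative errors of at most `u` multiply to `u ^ 2`.  No ordering of `|vh|` and `|w|` is needed
for this: it suffices that `vh` and `w` are integer multiples of a common power of two `2 ^ e` with
`|w| < 2 ^ (e + p)`.  This holds when `|w| ≤ |vh|`, and for fixed `w` it is stable under addition in
the other argument.

If `xh` and `yh` do not cancel, that is `|xh| + |yh| ≤ 3 * |xh + yh|`, bounding every rounding error
by `1/32` and every overlap `o * u` by `1/8` gives `|w| ≤ |vh|`.  If they cancel, their sum is exact
(Sterbenz), so `sl = 0` and `c = th`, and the same dichotomy applies to `sh + th`.  When `sh` and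
`th` do not cancel, again `|w| ≤ |vh|`.  When they cancel too, `vh = xh + yh + th` and `w = tl`.
Now `vh` may be much smaller than `w`, but each of `xh`, `yh`, `th` dominates `tl` in absolute
value, so the grid condition passes to their sum.
-/

/-- The radix-2, precision-`p` floating-point numbers with unlimited exponent range. -/
def Fp (p : ℕ) : Set ℝ := {x : ℝ | ∃ M e : ℤ, |M| ≤ 2 ^ p - 1 ∧ x = (M : ℝ) * (2 : ℝ) ^ e}

/-- Round toward `-∞`: the largest floating-point number `≤ x`. -/
noncomputable def RD (p : ℕ) (x : ℝ) : ℝ := sSup {f : ℝ | f ∈ Fp p ∧ f ≤ x}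

/-- Round toward `+∞`: the smallest floating-point number `≥ x`. -/
noncomputable def RU (p : ℕ) (x : ℝ) : ℝ := sInf {f : ℝ | f ∈ Fp p ∧ x ≤ f}

/-- `y` is a faithful rounding of `x`. -/
def Faithful (p : ℕ) (x y : ℝ) : Prop := y = RD p x ∨ y = RU p x

/-- All hypotheses of one execution of the accurate double-word addition algorithm
(`(s_h,s_l) = 2Sum(x_h,y_h)`, `(t_h,t_l) = 2Sum(x_l,y_l)`, `c = ∘(s_l+t_h)`,
`(v_h,v_l) = Fast2Sum(s_h,c)`, `w = ∘(t_l+v_l)`, `(z_h,z_l) = Fast2Sum(v_h,w)`)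
in faithful rounding, each rounding chosen independently. -/
def AccurateFaithful (p : ℕ) (xh xl yh yl sh a1 b1 da1 db1 sl th a2 b2 da2 db2 tl
    c vh d1 vl w zh d2 zl : ℝ) : Prop :=
  Faithful p (xh + yh) sh ∧ Faithful p (sh - yh) a1 ∧ Faithful p (sh - a1) b1 ∧
  Faithful p (xh - a1) da1 ∧ Faithful p (yh - b1) db1 ∧ Faithful p (da1 + db1) sl ∧
  Faithful p (xl + yl) th ∧ Faithful p (th - yl) a2 ∧ Faithful p (th - a2) b2 ∧
  Faithful p (xl - a2) da2 ∧ Faithful p (yl - b2) db2 ∧ Faithful p (da2 + db2) tl ∧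
  Faithful p (sl + th) c ∧
  Faithful p (sh + c) vh ∧ Faithful p (vh - sh) d1 ∧ Faithful p (c - d1) vl ∧
  Faithful p (tl + vl) w ∧
  Faithful p (vh + w) zh ∧ Faithful p (zh - vh) d2 ∧ Faithful p (w - d2) zl

/-! ### Dyadic grids -/

/-- The additive group of integer multiples of `2 ^ e`. -/
noncomputable def dyadicGrid (e : ℤ) : AddSubgroup ℝ := AddSubgroup.zmultiples ((2 : ℝ) ^ e)

theorem mem_dyadicGrid_iff {e : ℤ} {x : ℝ} :
    x ∈ dyadicGrid e ↔ ∃ N : ℤ, x = N * (2 : ℝ) ^ e := by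
  simp only [dyadicGrid, AddSubgroup.mem_zmultiples_iff, zsmul_eq_mul, eq_comm]

theorem zpow_mem_dyadicGrid {e k : ℤ} (h : e ≤ k) : (2 : ℝ) ^ k ∈ dyadicGrid e := by
  obtain ⟨n, rfl⟩ := Int.le.dest h
  refine mem_dyadicGrid_iff.mpr ⟨2 ^ n, ?_⟩
  rw [zpow_add₀ two_ne_zero, zpow_natCast]
  push_cast
  ring

theorem dyadicGrid_antitone : Antitone dyadicGrid := fun _ _ h =>
  AddSubgroup.zmultiples_le_of_mem (zpow_mem_dyadicGrid h)

theorem add_zpow_le_of_mem_dyadicGrid {e : ℤ} {x y : ℝ} (hx : x ∈ dyadicGrid e)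
    (hy : y ∈ dyadicGrid e) (hxy : x < y) : x + 2 ^ e ≤ y := by
  obtain ⟨M, rfl⟩ := mem_dyadicGrid_iff.mp hx
  obtain ⟨N, rfl⟩ := mem_dyadicGrid_iff.mp hy
  have hMN : (M : ℝ) < N := lt_of_mul_lt_mul_right hxy (by positivity)
  have hMN' : (M : ℝ) + 1 ≤ N := by exact_mod_cast hMN
  calc (M : ℝ) * 2 ^ e + 2 ^ e = (M + 1) * 2 ^ e := by ring
    _ ≤ N * 2 ^ e := by gcongr

theorem isGreatest_floor_mul_zpow (e : ℤ) (x : ℝ) :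
    IsGreatest {f : ℝ | f ∈ dyadicGrid e ∧ f ≤ x} (⌊x / 2 ^ e⌋ * 2 ^ e) := by
  have he : (0 : ℝ) < 2 ^ e := by positivity
  refine ⟨⟨mem_dyadicGrid_iff.mpr ⟨_, rfl⟩, (le_div_iff₀ he).mp (Int.floor_le _)⟩, ?_⟩
  rintro f ⟨hf, hfx⟩
  obtain ⟨N, rfl⟩ := mem_dyadicGrid_iff.mp hf
  have hN : N ≤ ⌊x / 2 ^ e⌋ := Int.le_floor.mpr ((le_div_iff₀ he).mpr hfx)
  gcongr

/-! ### Floating-point numbers -/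

theorem neg_mem_Fp {p : ℕ} {x : ℝ} (hx : x ∈ Fp p) : -x ∈ Fp p := by
  obtain ⟨M, e, hM, rfl⟩ := hx
  exact ⟨-M, e, by rwa [abs_neg], by push_cast; ring⟩

theorem zero_mem_Fp (p : ℕ) : (0 : ℝ) ∈ Fp p :=
  ⟨0, 0, by simpa using one_le_pow₀ (one_le_two (α := ℤ)), by simp⟩

theorem mem_Fp_iff {p : ℕ} {x : ℝ} :
    x ∈ Fp p ↔ ∃ e : ℤ, x ∈ dyadicGrid e ∧ |x| < 2 ^ (e + p) := by
  have abs_lt_iff (M e : ℤ) : |M * (2 : ℝ) ^ e| < 2 ^ (e + p) ↔ |M| ≤ 2 ^ p - 1 := by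
    have he : (0 : ℝ) < 2 ^ e := by positivity
    rw [zpow_add₀ two_ne_zero, zpow_natCast, abs_mul, abs_of_pos he, mul_comm,
      mul_lt_mul_iff_right₀ he, Int.le_sub_one_iff]
    exact_mod_cast Iff.rfl
  constructor
  · rintro ⟨M, e, hM, rfl⟩
    exact ⟨e, mem_dyadicGrid_iff.mpr ⟨M, rfl⟩, (abs_lt_iff M e).mpr hM⟩
  · rintro ⟨e, hx, hlt⟩
    obtain ⟨M, rfl⟩ := mem_dyadicGrid_iff.mp hx
    exact ⟨M, e, (abs_lt_iff M e).mp hlt, rfl⟩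

theorem mem_Fp_of_abs_le {p : ℕ} (hp : 1 ≤ p) {e : ℤ} {x : ℝ} (hx : x ∈ dyadicGrid e)
    (hle : |x| ≤ 2 ^ (e + p)) : x ∈ Fp p := by
  rcases hle.lt_or_eq with hlt | heq
  · exact mem_Fp_iff.mpr ⟨e, hx, hlt⟩
  · -- `± 2 ^ (e + p)` has one digit too many on the grid `e`, but only one on the grid `e + p`.
    refine mem_Fp_iff.mpr ⟨e + p, ?_, ?_⟩
    · rw [← abs_mem_iff, heq]
      exact zpow_mem_dyadicGrid le_rfl
    · rw [heq]
      exact zpow_lt_zpow_right₀ one_lt_two (by omega)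

theorem mem_dyadicGrid_of_zpow_le {p : ℕ} {e : ℤ} {a : ℝ} (ha : a ∈ Fp p)
    (h : (2 : ℝ) ^ (e + p - 1) ≤ |a|) : a ∈ dyadicGrid e := by
  obtain ⟨q, haq, hlt⟩ := mem_Fp_iff.mp ha
  have : e + p - 1 < q + p := (zpow_lt_zpow_iff_right₀ one_lt_two).mp (h.trans_lt hlt)
  exact dyadicGrid_antitone (by omega) haq

/-- The exponent of the unit in the last place of `x` in precision `p`.  At `x = 0` it has the junk
value `1 - p`. -/
noncomputable def ulpExp (p : ℕ) (x : ℝ) : ℤ := Int.log 2 |x| + 1 - p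

theorem abs_lt_zpow_ulpExp_add (p : ℕ) (x : ℝ) : |x| < 2 ^ (ulpExp p x + p) := by
  simpa [ulpExp] using Int.lt_zpow_succ_log_self one_lt_two |x|

theorem zpow_ulpExp_add_sub_one_le (p : ℕ) {x : ℝ} (hx : x ≠ 0) :
    (2 : ℝ) ^ (ulpExp p x + p - 1) ≤ |x| := by
  simpa [ulpExp] using Int.zpow_log_le_self one_lt_two (abs_pos.mpr hx)

theorem mem_dyadicGrid_ulpExp {p : ℕ} {a x : ℝ} (ha : a ∈ Fp p) (hx : x ≠ 0) (h : |x| ≤ |a|) :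
    a ∈ dyadicGrid (ulpExp p x) :=
  mem_dyadicGrid_of_zpow_le ha ((zpow_ulpExp_add_sub_one_le p hx).trans h)

/-! ### Faithful rounding -/

theorem RU_eq_neg_RD_neg (p : ℕ) (x : ℝ) : RU p x = -RD p (-x) := by
  have h : -{f : ℝ | f ∈ Fp p ∧ x ≤ f} = {f : ℝ | f ∈ Fp p ∧ f ≤ -x} := by
    ext f
    exact and_congr ⟨fun h => neg_neg f ▸ neg_mem_Fp h, neg_mem_Fp⟩ le_neg
  rw [RU, RD, Real.sInf_def, h]

theorem RD_eq_self {p : ℕ} {x : ℝ} (hx : x ∈ Fp p) : RD p x = x :=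
  IsGreatest.csSup_eq ⟨⟨hx, le_rfl⟩, fun _ hf => hf.2⟩

theorem isGreatest_floor_mul_zpow_ulpExp {p : ℕ} (hp : 1 ≤ p) (x : ℝ) :
    IsGreatest {f : ℝ | f ∈ Fp p ∧ f ≤ x} (⌊x / 2 ^ ulpExp p x⌋ * 2 ^ ulpExp p x) := by
  set e := ulpExp p x
  set r : ℝ := ⌊x / 2 ^ e⌋ * 2 ^ e
  obtain ⟨⟨hr, hrx⟩, hub⟩ := isGreatest_floor_mul_zpow e x
  obtain ⟨hlow, hupp⟩ := abs_lt.mp (abs_lt_zpow_ulpExp_add p x)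
  have hrlow : -(2 : ℝ) ^ (e + p) ≤ r :=
    hub ⟨neg_mem (zpow_mem_dyadicGrid (by omega)), hlow.le⟩
  refine ⟨⟨mem_Fp_of_abs_le hp hr (abs_le.mpr ⟨hrlow, hrx.trans hupp.le⟩), hrx⟩, ?_⟩
  rintro f ⟨hf, hfx⟩
  rcases eq_or_ne x 0 with rfl | hx
  · simpa [r] using hfx
  have hbot := zpow_ulpExp_add_sub_one_le p hx
  by_cases hfbot : (2 : ℝ) ^ (e + p - 1) ≤ |f|
  · exact hub ⟨mem_dyadicGrid_of_zpow_le hf hfbot, hfx⟩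
  · -- `f` lies in a lower binade than `x`, so `x > 0` and the bottom of its binade separates them.
    have hflt : |f| < 2 ^ (e + p - 1) := not_le.mp hfbot
    have hxpos : 0 < x := by grind
    have hbotx : (2 : ℝ) ^ (e + p - 1) ≤ x := by rwa [abs_of_pos hxpos] at hbot
    have hbotr : (2 : ℝ) ^ (e + p - 1) ≤ r := hub ⟨zpow_mem_dyadicGrid (by omega), hbotx⟩
    exact (le_abs_self f).trans (hflt.le.trans hbotr)

theorem RD_eq_floor_mul_zpow {p : ℕ} (hp : 1 ≤ p) (x : ℝ) :
    RD p x = ⌊x / 2 ^ ulpExp p x⌋ * 2 ^ ulpExp p x :=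
  (isGreatest_floor_mul_zpow_ulpExp hp x).csSup_eq

namespace Faithful

variable {p : ℕ} {x y : ℝ}

theorem eq_RD_or_neg_eq_RD (h : Faithful p x y) : y = RD p x ∨ -y = RD p (-x) :=
  h.imp_right fun h => by rw [h, RU_eq_neg_RD_neg, neg_neg]

theorem eq_of_mem (h : Faithful p x y) (hx : x ∈ Fp p) : y = x := by
  rcases h.eq_RD_or_neg_eq_RD with h | h
  · rw [h, RD_eq_self hx]
  · rwa [RD_eq_self (neg_mem_Fp hx), neg_inj] at h

theorem mem_Fp (h : Faithful p x y) (hp : 1 ≤ p) : y ∈ Fp p := by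
  have RD_mem (z : ℝ) : RD p z ∈ Fp p :=
    RD_eq_floor_mul_zpow hp z ▸ (isGreatest_floor_mul_zpow_ulpExp hp z).1.1
  rcases h.eq_RD_or_neg_eq_RD with h | h
  · exact h ▸ RD_mem x
  · exact neg_neg y ▸ neg_mem_Fp (h ▸ RD_mem (-x))

theorem mem_dyadicGrid (h : Faithful p x y) (hp : 1 ≤ p) : y ∈ dyadicGrid (ulpExp p x) := by
  have RD_mem (z : ℝ) : RD p z ∈ dyadicGrid (ulpExp p z) :=
    mem_dyadicGrid_iff.mpr ⟨_, RD_eq_floor_mul_zpow hp z⟩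
  rcases h.eq_RD_or_neg_eq_RD with h | h
  · exact h ▸ RD_mem x
  · have := h ▸ RD_mem (-x)
    rwa [neg_mem_iff, ulpExp, abs_neg] at this

theorem abs_sub_lt_ulp (h : Faithful p x y) (hp : 1 ≤ p) : |y - x| < 2 ^ ulpExp p x := by
  have RD_error (z : ℝ) : |RD p z - z| < 2 ^ ulpExp p z := by
    have hk : (0 : ℝ) < 2 ^ ulpExp p z := by positivity
    have hle := (le_div_iff₀ hk).mp (Int.floor_le (z / 2 ^ ulpExp p z))
    have hlt := (div_lt_iff₀ hk).mp (Int.lt_floor_add_one (z / 2 ^ ulpExp p z))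
    rw [RD_eq_floor_mul_zpow hp, abs_lt]
    constructor <;> linarith
  rcases h.eq_RD_or_neg_eq_RD with h | h
  · exact h ▸ RD_error x
  · have := h ▸ RD_error (-x)
    rwa [← neg_sub', abs_neg, ulpExp, abs_neg] at this

theorem abs_sub_le (h : Faithful p x y) (hp : 1 ≤ p) :
    |y - x| ≤ (2 : ℝ) ^ (1 - (p : ℤ)) * |x| := by
  rcases eq_or_ne x 0 with rfl | hx
  · simp [h.eq_of_mem (zero_mem_Fp p)]
  calc |y - x| ≤ 2 ^ ulpExp p x := (h.abs_sub_lt_ulp hp).le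
    _ = 2 ^ (1 - (p : ℤ)) * 2 ^ (ulpExp p x + p - 1) := by
      rw [← zpow_add₀ two_ne_zero]
      ring_nf
    _ ≤ 2 ^ (1 - (p : ℤ)) * |x| := by
      gcongr
      exact zpow_ulpExp_add_sub_one_le p hx

theorem abs_sub_le_div {B : ℝ} (h : Faithful p x y) (hp : 6 ≤ p) (hB : |x| ≤ B) :
    |y - x| ≤ B / 32 := by
  have hu : (2 : ℝ) ^ (1 - (p : ℤ)) ≤ 2 ^ (-5 : ℤ) :=
    zpow_le_zpow_right₀ one_le_two (by omega)
  calc |y - x| ≤ 2 ^ (1 - (p : ℤ)) * |x| := h.abs_sub_le (by omega)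
    _ ≤ 2 ^ (-5 : ℤ) * B := by gcongr
    _ = B / 32 := by norm_num; ring

end Faithful

/-! ### Sharing a grid -/

/-- `b` has at most `p` digits on some dyadic grid that contains `a`.  This condition makes the
subtraction `s - a` in Fast2Sum of `a` and `b` exact. -/
def SharesGrid (p : ℕ) (a b : ℝ) : Prop :=
  ∃ e : ℤ, a ∈ dyadicGrid e ∧ b ∈ dyadicGrid e ∧ |b| < 2 ^ (e + p)

theorem SharesGrid.of_abs_le {p : ℕ} {a b : ℝ} (ha : a ∈ Fp p) (hb : b ∈ Fp p)
    (h : |b| ≤ |a|) : SharesGrid p a b := by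
  rcases eq_or_ne b 0 with rfl | hb0
  · obtain ⟨e, hae, -⟩ := mem_Fp_iff.mp ha
    exact ⟨e, hae, zero_mem _, by rw [abs_zero]; positivity⟩
  · exact ⟨ulpExp p b, mem_dyadicGrid_ulpExp ha hb0 h, mem_dyadicGrid_ulpExp hb hb0 le_rfl,
      abs_lt_zpow_ulpExp_add p b⟩

theorem SharesGrid.add {p : ℕ} {a a' b : ℝ} (h : SharesGrid p a b) (h' : SharesGrid p a' b) :
    SharesGrid p (a + a') b := by
  obtain ⟨e, hae, hbe, hlt⟩ := h
  obtain ⟨e', hae', hbe', hlt'⟩ := h'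
  rcases le_total e e' with hle | hle
  · exact ⟨e, add_mem hae (dyadicGrid_antitone hle hae'), hbe, hlt⟩
  · exact ⟨e', add_mem (dyadicGrid_antitone hle hae) hae', hbe', hlt'⟩

/-- Sterbenz' lemma, for a sum instead of a difference. -/
theorem add_mem_Fp_of_abs_le {p : ℕ} {a b : ℝ} (ha : a ∈ Fp p) (hb : b ∈ Fp p)
    (hab_a : |a + b| ≤ |a|) (hab_b : |a + b| ≤ |b|) : a + b ∈ Fp p := by
  wlog hle : |b| ≤ |a| generalizing a b
  · rw [add_comm] at hab_a hab_b ⊢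
    exact this hb ha hab_b hab_a (le_of_not_ge hle)
  obtain ⟨e, hae, hbe, hlt⟩ := SharesGrid.of_abs_le ha hb hle
  exact mem_Fp_iff.mpr ⟨e, add_mem hae hbe, hab_b.trans_lt hlt⟩

theorem abs_add_le_both_or_abs_add_abs_le {R : Type*} [CommRing R] [LinearOrder R]
    [IsStrictOrderedRing R] (a b : R) :
    (|a + b| ≤ |a| ∧ |a + b| ≤ |b|) ∨ |a| + |b| ≤ 3 * |a + b| := by
  have ha : |a| ≤ |a + b| + |b| := by simpa using abs_sub (a + b) b
  have hb : |b| ≤ |a + b| + |a| := by simpa using abs_sub (a + b) a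
  rcases le_or_gt |a + b| |a| with ha' | ha'
  · rcases le_or_gt |a + b| |b| with hb' | hb'
    · exact .inl ⟨ha', hb'⟩
    · exact .inr (by linarith)
  · exact .inr (by linarith)

/-! ### The error-free transformations -/

/-- `(s, t)` is a possible output of Fast2Sum on `(a, b)` in faithful rounding. -/
def FastTwoSum (p : ℕ) (a b s t : ℝ) : Prop :=
  Faithful p (a + b) s ∧ ∃ d, Faithful p (s - a) d ∧ Faithful p (b - d) t

/-- `(s, t)` is a possible output of 2Sum on `(a, b)` in faithful rounding. -/
def TwoSum (p : ℕ) (a b s t : ℝ) : Prop :=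
  Faithful p (a + b) s ∧ ∃ a' b' δa δb, Faithful p (s - b) a' ∧ Faithful p (s - a') b' ∧
    Faithful p (a - a') δa ∧ Faithful p (b - b') δb ∧ Faithful p (δa + δb) t

theorem TwoSum.eq_of_add_mem {p : ℕ} {a b s t : ℝ} (h : TwoSum p a b s t) (ha : a ∈ Fp p)
    (hb : b ∈ Fp p) (hab : a + b ∈ Fp p) : s = a + b ∧ t = 0 := by
  obtain ⟨hs, a', b', δa, δb, ha', hb', hδa, hδb, ht⟩ := h
  obtain rfl := hs.eq_of_mem hab
  rw [add_sub_cancel_right] at ha'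
  obtain rfl := ha'.eq_of_mem ha
  rw [add_sub_cancel_left] at hb'
  obtain rfl := hb'.eq_of_mem hb
  rw [sub_self] at hδa hδb
  obtain rfl := hδa.eq_of_mem (zero_mem_Fp p)
  obtain rfl := hδb.eq_of_mem (zero_mem_Fp p)
  rw [add_zero] at ht
  exact ⟨rfl, ht.eq_of_mem (zero_mem_Fp p)⟩

theorem FastTwoSum.eq_of_add_mem {p : ℕ} {a b s t : ℝ} (h : FastTwoSum p a b s t)
    (hb : b ∈ Fp p) (hab : a + b ∈ Fp p) : s = a + b ∧ t = 0 := by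
  obtain ⟨hs, d, hd, ht⟩ := h
  obtain rfl := hs.eq_of_mem hab
  rw [add_sub_cancel_left] at hd
  obtain rfl := hd.eq_of_mem hb
  rw [sub_self] at ht
  exact ⟨rfl, ht.eq_of_mem (zero_mem_Fp p)⟩

theorem mem_dyadicGrid_pred_and_abs_add_le {p : ℕ} (hp : 1 ≤ p) {a b : ℝ} {e k : ℤ}
    (ha : a ∈ Fp p) (hae : a ∈ dyadicGrid e) (hbe : b ∈ dyadicGrid e) (hb : |b| < 2 ^ (e + p))
    (hek : e < k) (hab : (2 : ℝ) ^ (k + p - 1) ≤ |a + b|) :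
    a ∈ dyadicGrid (k - 1) ∧ |b| + 2 ^ (k - 1) ≤ (2 : ℝ) ^ (k - 1 + p) := by
  rcases (show e = k - 1 ∨ e + 1 ≤ k - 1 by omega) with rfl | hlt
  · exact ⟨hae, add_zpow_le_of_mem_dyadicGrid (abs_mem_iff.mpr hbe)
      (zpow_mem_dyadicGrid (by omega)) hb⟩
  · -- `|b|` is at most half of the lower end of the binade of `a + b`, so `a` takes up the rest.
    have hb_half : |b| < 2 ^ (k + p - 1 - 1) :=
      hb.trans_le (zpow_le_zpow_right₀ one_le_two (by omega))
    have hk : (2 : ℝ) ^ (k - 1) ≤ 2 ^ (k + p - 1 - 1) :=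
      zpow_le_zpow_right₀ one_le_two (by omega)
    have hdouble : (2 : ℝ) ^ (k + p - 1) = 2 * 2 ^ (k + p - 1 - 1) := by
      rw [← zpow_one_add₀ two_ne_zero, add_sub_cancel]
    refine ⟨mem_dyadicGrid_of_zpow_le ha ?_, ?_⟩
    · rw [show k - 1 + p - 1 = k + p - 1 - 1 by ring]
      linarith [abs_add_le a b]
    · rw [show k - 1 + p = k + p - 1 by ring]
      linarith

theorem Faithful.sub_mem_Fp_of_sharesGrid {p : ℕ} {a b s : ℝ} (hs : Faithful p (a + b) s)
    (hp : 1 ≤ p) (ha : a ∈ Fp p) (h : SharesGrid p a b) : s - a ∈ Fp p := by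
  obtain ⟨e, hae, hbe, hb⟩ := h
  rcases le_or_gt |a + b| (2 ^ (e + p)) with hle | hgt
  · rw [hs.eq_of_mem (mem_Fp_of_abs_le hp (add_mem hae hbe) hle), add_sub_cancel_left]
    exact mem_Fp_iff.mpr ⟨e, hbe, hb⟩
  -- On the grid of half an ulp of `a + b`, the difference `s - a` has at most `p` digits.
  set k := ulpExp p (a + b)
  have hek : e < k := by
    have := hgt.trans (abs_lt_zpow_ulpExp_add p (a + b))
    rw [zpow_lt_zpow_iff_right₀ one_lt_two] at this
    omega
  have hab0 : a + b ≠ 0 := abs_pos.mp (lt_trans (by positivity) hgt)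
  obtain ⟨hak, hbk⟩ := mem_dyadicGrid_pred_and_abs_add_le hp ha hae hbe hb hek
    (zpow_ulpExp_add_sub_one_le p hab0)
  have hsak : s - a ∈ dyadicGrid (k - 1) :=
    sub_mem (dyadicGrid_antitone (by omega) (hs.mem_dyadicGrid hp)) hak
  refine mem_Fp_of_abs_le hp hsak (le_of_not_gt fun hbig => ?_)
  have hstep : (2 : ℝ) ^ (k - 1 + p) + 2 ^ (k - 1) ≤ |s - a| :=
    add_zpow_le_of_mem_dyadicGrid (zpow_mem_dyadicGrid (by omega)) (abs_mem_iff.mpr hsak) hbig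
  have herr : |s - (a + b)| < 2 ^ (k - 1) + 2 ^ (k - 1) := by
    rw [← two_mul, ← zpow_one_add₀ two_ne_zero, add_sub_cancel]
    exact hs.abs_sub_lt_ulp hp
  have htri : |s - a| ≤ |s - (a + b)| + |b| := by
    simpa [← sub_sub] using abs_add_le (s - (a + b)) b
  linarith

/-- Since `d = s - a` is exact, `t` is a faithful rounding of the error of `s`. -/
theorem FastTwoSum.abs_add_sub_le {p : ℕ} {a b s t : ℝ} (h : FastTwoSum p a b s t) (hp : 1 ≤ p)
    (ha : a ∈ Fp p) (hab : SharesGrid p a b) :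
    |s + t - (a + b)| ≤ ((2 : ℝ) ^ (1 - (p : ℤ))) ^ 2 * |a + b| := by
  obtain ⟨hs, d, hd, ht⟩ := h
  obtain rfl := hd.eq_of_mem (hs.sub_mem_Fp_of_sharesGrid hp ha hab)
  calc |s + t - (a + b)| = |t - (b - (s - a))| := by congr 1; ring
    _ ≤ 2 ^ (1 - (p : ℤ)) * |b - (s - a)| := ht.abs_sub_le (by omega)
    _ = 2 ^ (1 - (p : ℤ)) * |s - (a + b)| := by rw [abs_sub_comm s]; congr 2; ring
    _ ≤ 2 ^ (1 - (p : ℤ)) * (2 ^ (1 - (p : ℤ)) * |a + b|) := by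
      gcongr
      exact hs.abs_sub_le (by omega)
    _ = (2 ^ (1 - (p : ℤ))) ^ 2 * |a + b| := by ring

/-! ### Accurate double-word addition -/

theorem TwoSum.abs_low_le {p : ℕ} {a b s t B : ℝ} (h : TwoSum p a b s t) (hp : 6 ≤ p)
    (ha : |a| ≤ 2 * B) (hb : |b| ≤ 2 * B) (hab : |a + b| ≤ B) : |t| ≤ B / 4 := by
  obtain ⟨hs, a', b', δa, δb, ha', hb', hδa, hδb, ht⟩ := h
  have hs_err := hs.abs_sub_le_div hp hab
  have ha'_err := ha'.abs_sub_le_div (B := 65 / 32 * B) hp (by grind)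
  have ha'_near : |a - a'| ≤ B / 10 := by grind
  have hb'_err := hb'.abs_sub_le_div (B := 21 / 10 * B) hp (by grind)
  have hb'_near : |b - b'| ≤ 2 / 15 * B := by grind
  have hδa_err := hδa.abs_sub_le_div hp ha'_near
  have hδb_err := hδb.abs_sub_le_div hp hb'_near
  have hδ : |δa + δb| ≤ 6 / 25 * B := by grind
  have ht_err := ht.abs_sub_le_div hp hδ
  grind

theorem FastTwoSum.abs_low_le {p : ℕ} {a b s t B : ℝ} (h : FastTwoSum p a b s t) (hp : 6 ≤ p)
    (hb : |b| ≤ 4 * B) (hab : |a + b| ≤ B) : |t| ≤ B / 4 := by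
  obtain ⟨hs, d, hd, ht⟩ := h
  have hs_err := hs.abs_sub_le_div hp hab
  have hd_err := hd.abs_sub_le_div (B := 5 * B) hp (by grind)
  have ht_err := ht.abs_sub_le_div (B := B / 5) hp (by grind)
  grind

theorem FastTwoSum.abs_correction_le {p : ℕ} {a c v r t w : ℝ} (hv : FastTwoSum p a c v r)
    (hp : 6 ≤ p) (hc : |c| ≤ 4 * |a + c|) (ht : |t| ≤ |a + c| / 2)
    (hw : Faithful p (t + r) w) : |w| ≤ |v| := by
  have hv_err := hv.1.abs_sub_le_div hp le_rfl
  have hr : |r| ≤ |a + c| / 4 := hv.abs_low_le hp hc le_rfl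
  have hw_err := hw.abs_sub_le_div (B := 3 / 4 * |a + c|) hp (by grind)
  grind

theorem TwoSum.abs_correction_le {p : ℕ} {xh yh sh sl th tl c vh vl w : ℝ}
    (hs : TwoSum p xh yh sh sl) (hp : 6 ≤ p) (hxy : |xh| + |yh| ≤ 3 * |xh + yh|)
    (hth : |th| ≤ 33 / 32 * ((|xh| + |yh|) / 8)) (htl : |tl| ≤ |th| / 8)
    (hc : Faithful p (sl + th) c) (hv : FastTwoSum p sh c vh vl) (hw : Faithful p (tl + vl) w) :
    |w| ≤ |vh| := by
  have hsl : |sl| ≤ |xh + yh| / 4 := hs.abs_low_le hp (by grind) (by grind) le_rfl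
  have hs_err := hs.1.abs_sub_le_div hp le_rfl
  have hc_err := hc.abs_sub_le_div (B := 2 / 3 * |xh + yh|) hp (by grind)
  have hc_le : |c| ≤ 11 / 16 * |xh + yh| := by grind
  have hsum_ge : 1 / 4 * |xh + yh| ≤ |sh + c| := by grind
  have hnonneg := abs_nonneg (xh + yh)
  exact hv.abs_correction_le hp (by linarith) (by linarith) hw

theorem Faithful.abs_le_of_overlap {p : ℕ} {xh xl yh yl th : ℝ} (h : Faithful p (xl + yl) th)
    (hp : 6 ≤ p) (hx : |xl| ≤ |xh| / 8) (hy : |yl| ≤ |yh| / 8) :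
    |th| ≤ 33 / 32 * ((|xh| + |yh|) / 8) := by
  have hth_err := h.abs_sub_le_div hp le_rfl
  grind

theorem sharesGrid_normalization {p : ℕ} (hp : 6 ≤ p) {xh yh sh sl th tl c vh vl w : ℝ}
    (hxh : xh ∈ Fp p) (hyh : yh ∈ Fp p) (hth : th ∈ Fp p) (htl : tl ∈ Fp p)
    (hth_le : |th| ≤ 33 / 32 * ((|xh| + |yh|) / 8)) (htl_le : |tl| ≤ |th| / 8)
    (hs : TwoSum p xh yh sh sl) (hc : Faithful p (sl + th) c) (hv : FastTwoSum p sh c vh vl)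
    (hw : Faithful p (tl + vl) w) : SharesGrid p vh w := by
  have hvh_mem := hv.1.mem_Fp (by omega)
  have hw_mem := hw.mem_Fp (by omega)
  rcases abs_add_le_both_or_abs_add_abs_le xh yh with ⟨hx_cancel, hy_cancel⟩ | hxy
  · have hxy_mem := add_mem_Fp_of_abs_le hxh hyh hx_cancel hy_cancel
    obtain ⟨rfl, rfl⟩ := hs.eq_of_add_mem hxh hyh hxy_mem
    rw [zero_add] at hc
    obtain rfl := hc.eq_of_mem hth
    rcases abs_add_le_both_or_abs_add_abs_le (xh + yh) c with ⟨hs_cancel, hc_cancel⟩ | hsc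
    · obtain ⟨rfl, rfl⟩ :=
        hv.eq_of_add_mem hth (add_mem_Fp_of_abs_le hxy_mem hth hs_cancel hc_cancel)
      rw [add_zero] at hw
      obtain rfl := hw.eq_of_mem htl
      have hw_xh : |w| ≤ |xh| := by grind
      have hw_yh : |w| ≤ |yh| := by grind
      have hw_th : |w| ≤ |c| := by grind
      exact ((SharesGrid.of_abs_le hxh hw_mem hw_xh).add (.of_abs_le hyh hw_mem hw_yh)).add
        (.of_abs_le hth hw_mem hw_th)
    · exact .of_abs_le hvh_mem hw_mem (hv.abs_correction_le hp (by grind) (by grind) hw)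
  · exact .of_abs_le hvh_mem hw_mem (hs.abs_correction_le hp hxy hth_le htl_le hc hv hw)

theorem abs_le_div_eight_of_overlap {K : Type*} [Field K] [LinearOrder K] [IsStrictOrderedRing K]
    {u o a b : K} (hu : 0 < u) (ho : o ≤ 1 / (8 * u)) (h : |a| ≤ o * u * |b|) :
    |a| ≤ |b| / 8 :=
  calc |a| ≤ o * u * |b| := h
    _ ≤ 1 / (8 * u) * u * |b| := by gcongr
    _ = |b| / 8 := by field_simp

theorem accurate_normalization_valid_general {p : ℕ} (hp : 6 ≤ p)
    {xh xl yh yl sh sl th tl c vh vl w zh zl : ℝ} (hxh : xh ∈ Fp p) (hyh : yh ∈ Fp p)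
    (hovx : |xl| ≤ |xh| / 8) (hovy : |yl| ≤ |yh| / 8) (hovt : |tl| ≤ |th| / 8)
    (hs : TwoSum p xh yh sh sl) (hth : Faithful p (xl + yl) th) (htl : tl ∈ Fp p)
    (hc : Faithful p (sl + th) c) (hv : FastTwoSum p sh c vh vl) (hw : Faithful p (tl + vl) w)
    (hz : FastTwoSum p vh w zh zl) :
    |zh + zl - (vh + w)| ≤ ((2 : ℝ) ^ (1 - (p : ℤ))) ^ 2 * |vh + w| :=
  hz.abs_add_sub_le (by omega) (hv.1.mem_Fp (by omega)) <|
    sharesGrid_normalization hp hxh hyh (hth.mem_Fp (by omega)) htl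
      (hth.abs_le_of_overlap hp hovx hovy) hovt hs hc hv hw

theorem accurate_normalization_valid
    (p : ℕ) (hp : 6 ≤ p) (u : ℝ) (hu : u = (2 : ℝ) ^ (1 - (p : ℤ)))
    (ox oy ot : ℝ) (hox1 : 1 ≤ ox) (hox2 : ox ≤ 1 / (8 * u) - 2)
    (hoy1 : 1 ≤ oy) (hoy2 : oy ≤ 1 / (8 * u) - 2)
    (hot1 : 1 ≤ ot) (hot2 : ot ≤ 1 / (8 * u) - 2)
    (xh xl yh yl : ℝ)
    (hxh : xh ∈ Fp p) (hxl : xl ∈ Fp p) (hyh : yh ∈ Fp p) (hyl : yl ∈ Fp p)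
    (hovx : |xl| ≤ ox * u * |xh|) (hovy : |yl| ≤ oy * u * |yh|)
    (sh a1 b1 da1 db1 sl th a2 b2 da2 db2 tl c vh d1 vl w zh d2 zl : ℝ)
    (hrun : AccurateFaithful p xh xl yh yl sh a1 b1 da1 db1 sl th a2 b2 da2 db2 tl
      c vh d1 vl w zh d2 zl)
    (hovt : |tl| ≤ ot * u * |th|) :
    |zh + zl - (vh + w)| ≤ u ^ 2 * |vh + w| := by
  obtain ⟨hsh, ha1, hb1, hda1, hdb1, hsl, hth, -, -, -, -, htl, hc, hvh, hd1, hvl, hw, hzh, hd2,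
    hzl⟩ := hrun
  have overlap {o a b : ℝ} (ho : o ≤ 1 / (8 * u) - 2) (h : |a| ≤ o * u * |b|) : |a| ≤ |b| / 8 :=
    abs_le_div_eight_of_overlap (hu ▸ by positivity) (ho.trans (by linarith)) h
  exact hu ▸ accurate_normalization_valid_general hp hxh hyh (overlap hox2 hovx)
    (overlap hoy2 hovy) (overlap hot2 hovt) ⟨hsh, a1, b1, da1, db1, ha1, hb1, hda1, hdb1, hsl⟩ hth
    (htl.mem_Fp (by omega)) hc ⟨hvh, d1, hd1, hvl⟩ hw ⟨hzh, d2, hd2, hzl⟩
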